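/- Let d ≥ 1, ρ > 0, σ > 0. Let U : ℝ^d → ℝ be twice continuously differentiable and ℤ^d-periodic, set b = ∇U and m = exp(2U/σ²). Let r : ℝ^d → ℝ be continuous and ℤ^d-periodic, and let V : ℝ^d → ℝ be twice continuously differentiable, ℤ^d-periodic, and satisfy ℒV = r on ℝ^d, i.e. ρ·V − (σ²/2)·ΔV − ∇U·∇V = r. Let φ = (φ₁, …, φ_n) : ℝ^d → ℝⁿ be twice continuously differentiable and ℤ^d-periodic with linearly independent components, and set v(x,θ) = θ·φ(x) for θ ∈ ℝⁿ. Then the n×n matrix H with entries H_{ij} = ∫_Q φ_i·ℒφ_j·m dx is invertible, and θ* := H⁻¹·(∫_Q r(x)·φ(x)·m(x) dx) is the unique minimizer over θ ∈ ℝⁿ of the functional J(θ) = ∫_Q [ ρ·(v(x,θ) − V(x))² + (σ²/2)·|∇_x v(x,θ) − ∇V(x)|² ]·m(x) dx. -/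

import Mathlib

/-!
The density `m = exp (2U/σ²)` turns the generator into a divergence-form operator,
`(ℒw) m = ρ w m - (σ²/2) div (m ∇w)`, so integrating by parts over a period gives
`∫_Q f (ℒw) m = ∫_Q (ρ f w + (σ²/2) ∇f · ∇w) m`, an inner product on periodic `C¹` functions.
For it, `H` is the Gram matrix of the features, `∫_Q r φᵢ m = ⟪φᵢ, V⟫` because `ℒV = r`, and
`J θ = ‖v(·, θ) - V‖²`. Hence `H θ = ∫_Q r φ m` are the normal equations of the orthogonal
projection of `V` onto the span of the features.
-/

open MeasureTheory Matrix
open scoped RealInnerProductSpace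

noncomputable section

/-- `ℤ^d`-periodicity of a function on `ℝ^d`. -/
def ZdPeriodic {d : ℕ} {α : Type*} (f : EuclideanSpace ℝ (Fin d) → α) : Prop :=
  ∀ x : EuclideanSpace ℝ (Fin d), ∀ n : Fin d → ℤ,
    f (x + (WithLp.equiv 2 (Fin d → ℝ)).symm fun i => (n i : ℝ)) = f x

/-- The unit cube `Q = [0,1)^d`. -/
def unitCube (d : ℕ) : Set (EuclideanSpace ℝ (Fin d)) :=
  {x | ∀ i, x i ∈ Set.Ico (0 : ℝ) 1}

/-- The Laplacian of `f` at `x`: the sum of the diagonal second derivatives. -/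
def lapl {d : ℕ} (f : EuclideanSpace ℝ (Fin d) → ℝ) (x : EuclideanSpace ℝ (Fin d)) : ℝ :=
  ∑ i, iteratedFDeriv ℝ 2 f x ![EuclideanSpace.single i 1, EuclideanSpace.single i 1]

/-- The generator with gradient drift `∇U`:
`ℒw(x) = ρ w(x) - (σ²/2) Δw(x) - ∇U(x)·∇w(x)`. -/
def genU {d : ℕ} (ρ σ : ℝ) (U : EuclideanSpace ℝ (Fin d) → ℝ)
    (w : EuclideanSpace ℝ (Fin d) → ℝ) (x : EuclideanSpace ℝ (Fin d)) : ℝ :=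
  ρ * w x - σ ^ 2 / 2 * lapl w x - ⟪gradient U x, gradient w x⟫

section Galerkin

variable {E ι : Type*} [NormedAddCommGroup E] [InnerProductSpace ℝ E] [Fintype ι]
  {p : ι → E} {v : E}

lemma norm_sum_smul_sub_sq_of_gram_mulVec_eq {θ : ι → ℝ}
    (hθ : gram ℝ p *ᵥ θ = fun i => ⟪p i, v⟫) (η : ι → ℝ) :
    ‖∑ i, η i • p i - v‖ ^ 2 =
      ‖∑ i, θ i • p i - v‖ ^ 2 + ‖∑ i, (η - θ) i • p i‖ ^ 2 := by
  have residual_orthogonal (i : ι) : ⟪∑ j, θ j • p j - v, p i⟫ = 0 := by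
    rw [real_inner_comm, inner_sub_right, inner_sum, sub_eq_zero, ← congrFun hθ i]
    simp only [mulVec, dotProduct, gram_apply, real_inner_smul_right, mul_comm]
  have decomposition : ∑ i, η i • p i - v =
      (∑ i, θ i • p i - v) + ∑ i, (η - θ) i • p i := by
    simp only [Pi.sub_apply, sub_smul, Finset.sum_sub_distrib]
    abel
  simp only [decomposition, norm_add_sq_real, inner_sum, real_inner_smul_right,
    residual_orthogonal, mul_zero, Finset.sum_const_zero, add_zero]

variable [DecidableEq ι]

theorem inv_gram_mulVec_isMinimizer (hp : LinearIndependent ℝ p) {θ : ι → ℝ}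
    (hθ : θ = (gram ℝ p)⁻¹ *ᵥ fun i => ⟪p i, v⟫) :
    (∀ η : ι → ℝ, ‖∑ i, θ i • p i - v‖ ^ 2 ≤ ‖∑ i, η i • p i - v‖ ^ 2) ∧
      ∀ η : ι → ℝ, ‖∑ i, η i • p i - v‖ ^ 2 = ‖∑ i, θ i • p i - v‖ ^ 2 → η = θ := by
  have normal_eq : gram ℝ p *ᵥ θ = fun i => ⟪p i, v⟫ := by
    rw [hθ, mulVec_mulVec, mul_nonsing_inv _
      (isUnit_iff_ne_zero.2 (det_gram_ne_zero_iff_linearIndependent.2 hp)), one_mulVec]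
  have pythagoras := norm_sum_smul_sub_sq_of_gram_mulVec_eq normal_eq
  refine ⟨fun η => by rw [pythagoras η]; exact le_add_of_nonneg_right (sq_nonneg _),
    fun η hη => ?_⟩
  rw [pythagoras η, add_eq_left, sq_eq_zero_iff, norm_eq_zero] at hη
  exact sub_eq_zero.1 (funext (Fintype.linearIndependent_iff.1 hp _ hη))

end Galerkin

section Gradient

open scoped ComplexConjugate

variable {𝕜 F : Type*} [RCLike 𝕜] [NormedAddCommGroup F] [InnerProductSpace 𝕜 F]
  [CompleteSpace F] {f g : F → 𝕜} {x : F}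

lemma gradient_add (hf : DifferentiableAt 𝕜 f x) (hg : DifferentiableAt 𝕜 g x) :
    gradient (f + g) x = gradient f x + gradient g x := by
  simp only [gradient, fderiv_add hf hg, map_add]

lemma gradient_sub (hf : DifferentiableAt 𝕜 f x) (hg : DifferentiableAt 𝕜 g x) :
    gradient (f - g) x = gradient f x - gradient g x := by
  simp only [gradient, fderiv_sub hf hg, map_sub]

lemma gradient_const_smul (hf : DifferentiableAt 𝕜 f x) (c : 𝕜) :
    gradient (c • f) x = conj c • gradient f x := by
  simp only [gradient, fderiv_const_smul hf c, map_smulₛₗ]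

lemma gradient_mul (hf : DifferentiableAt 𝕜 f x) (hg : DifferentiableAt 𝕜 g x) :
    gradient (fun y => f y * g y) x = conj (f x) • gradient g x + conj (g x) • gradient f x := by
  simp only [gradient, fderiv_fun_mul hf hg, map_add, map_smulₛₗ]

lemma continuous_gradient (hf : ContDiff 𝕜 1 f) : Continuous (gradient f) :=
  (InnerProductSpace.toDual 𝕜 F).symm.continuous.comp (hf.continuous_fderiv one_ne_zero)

end Gradient

section UnitCube

variable {d : ℕ} {F : Type*} [NormedAddCommGroup F]

lemma setIntegral_unitCube_eq_setIntegral_Icc [NormedSpace ℝ F]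
    (g : EuclideanSpace ℝ (Fin d) → F) :
    ∫ x in unitCube d, g x = ∫ y in Set.Icc (0 : Fin d → ℝ) 1, g (WithLp.toLp 2 y) := by
  have unitCube_eq_preimage :
      unitCube d = WithLp.ofLp ⁻¹' (Set.univ.pi fun _ => Set.Ico (0 : ℝ) 1) := by
    ext x
    simp [unitCube]
  rw [unitCube_eq_preimage]
  exact ((PiLp.volume_preserving_ofLp (Fin d)).setIntegral_preimage_emb
    (EuclideanSpace.equiv (Fin d) ℝ).toHomeomorph.measurableEmbedding
    (fun y => g (WithLp.toLp 2 y)) _).trans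
      (setIntegral_congr_set (Measure.univ_pi_Ico_ae_eq_Icc (f := 0) (g := 1)))

lemma integrableOn_unitCube {g : EuclideanSpace ℝ (Fin d) → F} (hg : Continuous g) :
    IntegrableOn g (unitCube d) := by
  have isCompact_closedCube :
      IsCompact (EuclideanSpace.equiv (Fin d) ℝ ⁻¹' Set.Icc (0 : Fin d → ℝ) 1) :=
    (EuclideanSpace.equiv (Fin d) ℝ).toHomeomorph.isCompact_preimage.2 isCompact_Icc
  exact (hg.continuousOn.integrableOn_compact isCompact_closedCube).mono_set
    fun x hx => ⟨fun i => (hx i).1, fun i => (hx i).2.le⟩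

lemma eqOn_zero_of_setIntegral_unitCube_eq_zero {g : EuclideanSpace ℝ (Fin d) → ℝ}
    (hg : Continuous g) (hg0 : 0 ≤ g) (hint : ∫ x in unitCube d, g x = 0) :
    Set.EqOn g 0 (unitCube d) := by
  have hg' : Continuous fun y : Fin d → ℝ => g (WithLp.toLp 2 y) :=
    hg.comp (EuclideanSpace.equiv (Fin d) ℝ).symm.continuous
  rw [setIntegral_unitCube_eq_setIntegral_Icc, setIntegral_eq_zero_iff_of_nonneg_ae
    (.of_forall fun y => hg0 (WithLp.toLp 2 y)) hg'.integrableOn_Icc] at hint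
  have subset_closure_interior :
      Set.Icc (0 : Fin d → ℝ) 1 ⊆ closure (interior (Set.Icc 0 1)) := by
    rw [← Set.pi_univ_Icc, interior_pi_set Set.finite_univ, closure_pi_set]
    simp
  have eqOn_Icc := Measure.eqOn_of_ae_eq hint hg'.continuousOn continuousOn_const
    subset_closure_interior
  exact fun x hx => eqOn_Icc (x := x.ofLp) ⟨fun i => (hx i).1, fun i => (hx i).2.le⟩

end UnitCube

section Periodic

variable {d : ℕ}

lemma ZdPeriodic.eq_of_eqOn_unitCube {α : Type*} {f g : EuclideanSpace ℝ (Fin d) → α}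
    (hf : ZdPeriodic f) (hg : ZdPeriodic g) (h : Set.EqOn f g (unitCube d)) : f = g := by
  ext x
  have fract_add_floor : WithLp.toLp 2 (fun i => Int.fract (x i)) +
      (WithLp.equiv 2 (Fin d → ℝ)).symm (fun i => (⌊x i⌋ : ℝ)) = x := by
    ext i
    simp
  rw [← fract_add_floor, hf, hg]
  exact h fun i => ⟨Int.fract_nonneg _, Int.fract_lt_one _⟩

lemma ZdPeriodic.fderiv {F : Type*} [NormedAddCommGroup F] [NormedSpace ℝ F]
    {f : EuclideanSpace ℝ (Fin d) → F} (hf : ZdPeriodic f) : ZdPeriodic (fderiv ℝ f) :=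
  fun x n => by
    rw [← fderiv_comp_add_right]
    exact congrArg (fun g => _root_.fderiv ℝ g x) (funext fun y => hf y n)

theorem integral_unitCube_divergence_eq_zero {G : Fin d → EuclideanSpace ℝ (Fin d) → ℝ}
    (hG : ∀ i, ContDiff ℝ 1 (G i)) (hGper : ∀ i, ZdPeriodic (G i)) :
    ∫ x in unitCube d, ∑ i, fderiv ℝ (G i) x (EuclideanSpace.single i 1) = 0 := by
  cases d with
  | zero => simp
  | succ k =>
  let L : (Fin (k + 1) → ℝ) →L[ℝ] EuclideanSpace ℝ (Fin (k + 1)) :=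
    (EuclideanSpace.equiv (Fin (k + 1)) ℝ).symm
  have divergence_theorem := integral_divergence_of_hasFDerivAt_off_countable'
    (0 : Fin (k + 1) → ℝ) 1 zero_le_one
    (fun i => G i ∘ L) (fun i y => (fderiv ℝ (G i) (L y)).comp L) ∅ Set.countable_empty
    (fun i => ((hG i).continuous.comp L.continuous).continuousOn)
    (fun y _ i => (((hG i).differentiable one_ne_zero) (L y)).hasFDerivAt.comp y L.hasFDerivAt)
    (Continuous.integrableOn_Icc <| continuous_finsetSum _ fun i _ =>
      (((hG i).continuous_fderiv one_ne_zero).comp L.continuous).clm_apply continuous_const)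
  rw [setIntegral_unitCube_eq_setIntegral_Icc]
  refine divergence_theorem.trans (Finset.sum_eq_zero fun i _ => ?_)
  have opposite_faces_eq (y : Fin k → ℝ) :
      G i (L (i.insertNth 1 y)) = G i (L (i.insertNth 0 y)) := by
    rw [← hGper i (L (i.insertNth 0 y)) (Pi.single i 1)]
    congr 1
    ext j
    cases j using Fin.succAboveCases i <;> simp [L]
  rw [sub_eq_zero]
  exact congrArg (integral _) (funext opposite_faces_eq)

end Periodic

section WeightedH1

variable {d : ℕ} {ρ κ : ℝ} {m f g h w : EuclideanSpace ℝ (Fin d) → ℝ}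

lemma real_inner_gradient_eq_sum (x : EuclideanSpace ℝ (Fin d)) :
    ⟪gradient f x, gradient g x⟫ =
      ∑ i, fderiv ℝ f x (EuclideanSpace.single i 1) * fderiv ℝ g x (EuclideanSpace.single i 1) := by
  rw [← (EuclideanSpace.basisFun (Fin d) ℝ).sum_inner_mul_inner]
  simp

/-- The weighted Sobolev pairing `∫_Q (ρ f g + κ ∇f · ∇g) m` over one period. It is the
inner product in which the value function gets projected onto the span of the features. -/
def weightedH1Form (ρ κ : ℝ) (m f g : EuclideanSpace ℝ (Fin d) → ℝ) : ℝ :=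
  ∫ x in unitCube d, (ρ * (f x * g x) + κ * ⟪gradient f x, gradient g x⟫) * m x

lemma continuous_weightedH1_integrand (hm : Continuous m) (hf : ContDiff ℝ 1 f)
    (hg : ContDiff ℝ 1 g) :
    Continuous fun x => (ρ * (f x * g x) + κ * ⟪gradient f x, gradient g x⟫) * m x := by
  have := hf.continuous
  have := hg.continuous
  have := continuous_gradient hf
  have := continuous_gradient hg
  fun_prop

lemma weightedH1Form_comm : weightedH1Form ρ κ m f g = weightedH1Form ρ κ m g f := by
  simp only [weightedH1Form, real_inner_comm, mul_comm]

lemma weightedH1Form_add_left (hm : Continuous m) (hf : ContDiff ℝ 1 f) (hg : ContDiff ℝ 1 g)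
    (hh : ContDiff ℝ 1 h) :
    weightedH1Form ρ κ m (f + g) h = weightedH1Form ρ κ m f h + weightedH1Form ρ κ m g h := by
  simp only [weightedH1Form]
  rw [← integral_add (integrableOn_unitCube (continuous_weightedH1_integrand hm hf hh))
    (integrableOn_unitCube (continuous_weightedH1_integrand hm hg hh))]
  refine congrArg (integral _) (funext fun x => ?_)
  rw [gradient_add (hf.differentiable one_ne_zero x) (hg.differentiable one_ne_zero x),
    inner_add_left, Pi.add_apply]
  ring

lemma weightedH1Form_smul_left (hf : Differentiable ℝ f) (c : ℝ) :
    weightedH1Form ρ κ m (c • f) g = c * weightedH1Form ρ κ m f g := by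
  simp only [weightedH1Form]
  rw [← integral_const_mul]
  refine congrArg (integral _) (funext fun x => ?_)
  rw [gradient_const_smul (hf x), conj_trivial, real_inner_smul_left, Pi.smul_apply, smul_eq_mul]
  ring

lemma weightedH1Form_sub_self (hf : Differentiable ℝ f) (hg : Differentiable ℝ g) :
    weightedH1Form ρ κ m (f - g) (f - g) = ∫ x in unitCube d,
      (ρ * (f x - g x) ^ 2 + κ * ‖gradient f x - gradient g x‖ ^ 2) * m x := by
  simp only [weightedH1Form, gradient_sub (hf _) (hg _), real_inner_self_eq_norm_sq, ← pow_two,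
    Pi.sub_apply]

lemma weightedH1_integrand_self_nonneg (hρ : 0 ≤ ρ) (hκ : 0 ≤ κ) (hm : 0 ≤ m) :
    0 ≤ fun x => (ρ * (f x * f x) + κ * ⟪gradient f x, gradient f x⟫) * m x := fun x =>
  mul_nonneg (add_nonneg (mul_nonneg hρ (mul_self_nonneg _))
    (mul_nonneg hκ real_inner_self_nonneg)) (hm x)

lemma weightedH1Form_self_nonneg (hρ : 0 ≤ ρ) (hκ : 0 ≤ κ) (hm : 0 ≤ m) :
    0 ≤ weightedH1Form ρ κ m f f :=
  integral_nonneg (weightedH1_integrand_self_nonneg hρ hκ hm)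

lemma eq_zero_of_weightedH1Form_self_eq_zero (hρ : 0 < ρ) (hκ : 0 ≤ κ) (hm : Continuous m)
    (hm0 : ∀ x, 0 < m x) (hf : ContDiff ℝ 1 f) (hfper : ZdPeriodic f)
    (h : weightedH1Form ρ κ m f f = 0) : f = 0 := by
  refine hfper.eq_of_eqOn_unitCube (fun _ _ => rfl) fun x hx => ?_
  have integrand_eq_zero := eqOn_zero_of_setIntegral_unitCube_eq_zero
    (continuous_weightedH1_integrand hm hf hf)
    (weightedH1_integrand_self_nonneg hρ.le hκ fun y => (hm0 y).le) h hx
  have gradient_term_nonneg : 0 ≤ κ * ⟪gradient f x, gradient f x⟫ :=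
    mul_nonneg hκ real_inner_self_nonneg
  have sum_eq_zero : ρ * (f x * f x) + κ * ⟪gradient f x, gradient f x⟫ = 0 :=
    (mul_eq_zero.1 integrand_eq_zero).resolve_right (hm0 x).ne'
  have := mul_self_nonneg (f x)
  exact mul_self_eq_zero.1 (by nlinarith)

/-- The space of `ℤ^d`-periodic `C¹` functions on `ℝ^d`, the domain of the weighted
Sobolev inner product. -/
def periodicC1 (d : ℕ) : Submodule ℝ (EuclideanSpace ℝ (Fin d) → ℝ) where
  carrier := {f | ContDiff ℝ 1 f ∧ ZdPeriodic f}
  zero_mem' := ⟨contDiff_const, fun _ _ => rfl⟩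
  add_mem' hf hg := ⟨hf.1.add hg.1, fun x n => congrArg₂ (· + ·) (hf.2 x n) (hg.2 x n)⟩
  smul_mem' c _ hf := ⟨hf.1.const_smul c, fun x n => congrArg (c • ·) (hf.2 x n)⟩

/-- The inner product structure given by `weightedH1Form` on the periodic `C¹` functions. It is
not an instance, because it depends on the weight `m` and on the coefficients `ρ` and `κ`. -/
abbrev weightedH1Core (hρ : 0 < ρ) (hκ : 0 ≤ κ) (hm : Continuous m) (hm0 : ∀ x, 0 < m x) :
    InnerProductSpace.Core ℝ (periodicC1 d) where
  inner f g := weightedH1Form ρ κ m f g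
  conj_inner_symm _ _ := weightedH1Form_comm
  re_inner_nonneg _ := weightedH1Form_self_nonneg hρ.le hκ fun x => (hm0 x).le
  add_left f g h := weightedH1Form_add_left hm f.2.1 g.2.1 h.2.1
  smul_left f _ c := weightedH1Form_smul_left (f.2.1.differentiable one_ne_zero) c
  definite f h := Subtype.ext
    (eq_zero_of_weightedH1Form_self_eq_zero hρ hκ hm hm0 f.2.1 f.2.2 h)

end WeightedH1

section IntegrationByParts

variable {d : ℕ} {ρ σ : ℝ} {U f h w : EuclideanSpace ℝ (Fin d) → ℝ}

lemma lapl_eq_sum_fderiv_fderiv (x : EuclideanSpace ℝ (Fin d)) :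
    lapl w x = ∑ i, fderiv ℝ (fderiv ℝ w) x (EuclideanSpace.single i 1)
      (EuclideanSpace.single i 1) := by
  simp [lapl, iteratedFDeriv_two_apply]

lemma continuous_lapl (hw : ContDiff ℝ 2 w) : Continuous (lapl w) :=
  continuous_finsetSum _ fun _ _ => by
    have := hw.continuous_iteratedFDeriv le_rfl
    fun_prop

lemma divergence_mul_gradient {x : EuclideanSpace ℝ (Fin d)} (hh : DifferentiableAt ℝ h x)
    (hw : DifferentiableAt ℝ (fderiv ℝ w) x) :
    ∑ i, fderiv ℝ (fun y => h y * fderiv ℝ w y (EuclideanSpace.single i 1)) x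
        (EuclideanSpace.single i 1) =
      ⟪gradient h x, gradient w x⟫ + h x * lapl w x := by
  rw [real_inner_gradient_eq_sum, lapl_eq_sum_fderiv_fderiv, Finset.mul_sum,
    ← Finset.sum_add_distrib]
  refine Finset.sum_congr rfl fun i _ => ?_
  rw [fderiv_fun_mul hh (hw.clm_apply (differentiableAt_const _)),
    fderiv_clm_apply hw (differentiableAt_const _)]
  simp [mul_comm, add_comm]

theorem integral_inner_gradient_add_mul_lapl_eq_zero (hh : ContDiff ℝ 1 h) (hhper : ZdPeriodic h)
    (hw : ContDiff ℝ 2 w) (hwper : ZdPeriodic w) :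
    ∫ x in unitCube d, (⟪gradient h x, gradient w x⟫ + h x * lapl w x) = 0 := by
  have hw' : ContDiff ℝ 1 (fderiv ℝ w) := hw.fderiv_right le_rfl
  simp only [← divergence_mul_gradient (hh.differentiable one_ne_zero _)
    (hw'.differentiable one_ne_zero _)]
  exact integral_unitCube_divergence_eq_zero (fun i => hh.mul (hw'.clm_apply contDiff_const))
    (fun i x n => by simp only [hhper x n, hwper.fderiv x n])

/-- The unnormalised invariant density `m = exp (2U/σ²)` of the Langevin dynamics. -/
def gibbsWeight (σ : ℝ) (U : EuclideanSpace ℝ (Fin d) → ℝ) (x : EuclideanSpace ℝ (Fin d)) : ℝ :=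
  Real.exp (2 * U x / σ ^ 2)

lemma gibbsWeight_pos (x : EuclideanSpace ℝ (Fin d)) : 0 < gibbsWeight σ U x :=
  Real.exp_pos _

lemma contDiff_gibbsWeight (hU : ContDiff ℝ 1 U) : ContDiff ℝ 1 (gibbsWeight σ U) := by
  unfold gibbsWeight
  fun_prop

lemma ZdPeriodic.gibbsWeight (hU : ZdPeriodic U) : ZdPeriodic (gibbsWeight σ U) := fun x n => by
  simp only [_root_.gibbsWeight, hU x n]

lemma hasGradientAt_gibbsWeight {x : EuclideanSpace ℝ (Fin d)} (hU : DifferentiableAt ℝ U x) :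
    HasGradientAt (gibbsWeight σ U) ((2 / σ ^ 2 * gibbsWeight σ U x) • gradient U x) x := by
  have hasFDerivAt_exp := (hU.hasFDerivAt.const_mul (2 / σ ^ 2)).exp
  simp only [← mul_div_right_comm] at hasFDerivAt_exp
  rw [hasGradientAt_iff_hasFDerivAt, map_smul, toDual_gradient, mul_comm, mul_smul]
  exact hasFDerivAt_exp

lemma mul_genU_mul_gibbsWeight (hσ : σ ≠ 0) {x : EuclideanSpace ℝ (Fin d)}
    (hU : DifferentiableAt ℝ U x) (hf : DifferentiableAt ℝ f x) :
    f x * genU ρ σ U w x * gibbsWeight σ U x =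
      (ρ * (f x * w x) + σ ^ 2 / 2 * ⟪gradient f x, gradient w x⟫) * gibbsWeight σ U x -
        σ ^ 2 / 2 * (⟪gradient (fun y => f y * gibbsWeight σ U y) x, gradient w x⟫ +
          f x * gibbsWeight σ U x * lapl w x) := by
  have hm := hasGradientAt_gibbsWeight (σ := σ) hU
  rw [gradient_mul hf hm.differentiableAt, hm.gradient, conj_trivial, conj_trivial,
    inner_add_left, real_inner_smul_left, real_inner_smul_left, real_inner_smul_left, genU]
  field_simp
  ring

theorem integral_mul_genU_mul_gibbsWeight (hσ : σ ≠ 0) (hU : ContDiff ℝ 1 U)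
    (hUper : ZdPeriodic U) (hf : ContDiff ℝ 1 f) (hfper : ZdPeriodic f) (hw : ContDiff ℝ 2 w)
    (hwper : ZdPeriodic w) :
    ∫ x in unitCube d, f x * genU ρ σ U w x * gibbsWeight σ U x =
      weightedH1Form ρ (σ ^ 2 / 2) (gibbsWeight σ U) f w := by
  have hm : ContDiff ℝ 1 (gibbsWeight σ U) := contDiff_gibbsWeight hU
  have hfm : ContDiff ℝ 1 fun x => f x * gibbsWeight σ U x := hf.mul hm
  have hfmper : ZdPeriodic fun x => f x * gibbsWeight σ U x := fun x n => by
    simp only [hfper x n, hUper.gibbsWeight x n]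
  have hw1 : ContDiff ℝ 1 w := hw.of_le one_le_two
  have continuous_divergence : Continuous fun x =>
      ⟪gradient (fun y => f y * gibbsWeight σ U y) x, gradient w x⟫ +
        f x * gibbsWeight σ U x * lapl w x :=
    ((continuous_gradient hfm).inner (continuous_gradient hw1)).add
      (hfm.continuous.mul (continuous_lapl hw))
  simp only [mul_genU_mul_gibbsWeight hσ (hU.differentiable one_ne_zero _)
    (hf.differentiable one_ne_zero _)]
  rw [integral_sub
      (integrableOn_unitCube (continuous_weightedH1_integrand hm.continuous hf hw1))
      ((integrableOn_unitCube continuous_divergence).const_mul _),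
    integral_const_mul, integral_inner_gradient_add_mul_lapl_eq_zero hfm hfmper hw hwper,
    mul_zero, sub_zero, weightedH1Form]

end IntegrationByParts

theorem tdzero_limit_is_minimizer_general {d : ℕ} {ι : Type*} [Fintype ι] [DecidableEq ι]
    {ρ σ : ℝ} (hρ : 0 < ρ) (hσ : σ ≠ 0)
    {U : EuclideanSpace ℝ (Fin d) → ℝ} (hU : ContDiff ℝ 1 U) (hUper : ZdPeriodic U)
    {m : EuclideanSpace ℝ (Fin d) → ℝ} (hm : m = fun x => Real.exp (2 * U x / σ ^ 2))
    {r V : EuclideanSpace ℝ (Fin d) → ℝ} (hV : ContDiff ℝ 2 V) (hVper : ZdPeriodic V)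
    (hPDE : ∀ x, genU ρ σ U V x = r x)
    {φ : ι → EuclideanSpace ℝ (Fin d) → ℝ}
    (hφ : ∀ i, ContDiff ℝ 2 (φ i)) (hφper : ∀ i, ZdPeriodic (φ i))
    (hφli : LinearIndependent ℝ φ)
    {H : Matrix ι ι ℝ}
    (hH : ∀ i j, H i j = ∫ x in unitCube d, φ i x * genU ρ σ U (φ j) x * m x)
    {J : (ι → ℝ) → ℝ}
    (hJ : ∀ θ, J θ =
      ∫ x in unitCube d,
        (ρ * ((∑ i, θ i * φ i x) - V x) ^ 2 +
          σ ^ 2 / 2 * ‖gradient (fun y => ∑ i, θ i * φ i y) x - gradient V x‖ ^ 2) * m x)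
    {θstar : ι → ℝ}
    (hθstar : θstar = H⁻¹.mulVec fun i => ∫ x in unitCube d, r x * φ i x * m x) :
    IsUnit H ∧ (∀ θ, J θstar ≤ J θ) ∧ ∀ θ, J θ = J θstar → θ = θstar := by
  obtain rfl : m = gibbsWeight σ U := hm
  let core := weightedH1Core (d := d) hρ (by positivity : 0 ≤ σ ^ 2 / 2)
    (contDiff_gibbsWeight (σ := σ) hU).continuous gibbsWeight_pos
  let _ : NormedAddCommGroup (periodicC1 d) := core.toNormedAddCommGroup
  let _ : InnerProductSpace ℝ (periodicC1 d) := .ofCore core.toCore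
  let p (i : ι) : periodicC1 d := ⟨φ i, (hφ i).of_le one_le_two, hφper i⟩
  let v : periodicC1 d := ⟨V, hV.of_le one_le_two, hVper⟩
  have hp : LinearIndependent ℝ p := .of_comp (periodicC1 d).subtype hφli
  have integral_mul_genU {w} (i : ι) := integral_mul_genU_mul_gibbsWeight (ρ := ρ) (w := w) hσ hU
    hUper (p i).2.1 (p i).2.2
  have H_eq_gram : H = gram ℝ p := by
    ext i j
    rw [hH, integral_mul_genU i (hφ j) (hφper j)]
    rfl
  have rhs_eq_inner (i : ι) : ∫ x in unitCube d, r x * φ i x * gibbsWeight σ U x = ⟪p i, v⟫ := by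
    simp only [← hPDE, mul_comm (genU ρ σ U V _)]
    exact integral_mul_genU i hV hVper
  have coe_sum (θ : ι → ℝ) : ((∑ i, θ i • p i : periodicC1 d) : EuclideanSpace ℝ (Fin d) → ℝ) =
      fun x => ∑ i, θ i * φ i x := by
    ext x
    simp [p]
  have J_eq_norm_sq (θ : ι → ℝ) : J θ = ‖∑ i, θ i • p i - v‖ ^ 2 :=
    calc J θ = weightedH1Form ρ (σ ^ 2 / 2) (gibbsWeight σ U)
          (↑(∑ i, θ i • p i) - V) (↑(∑ i, θ i • p i) - V) := by
          rw [weightedH1Form_sub_self ((∑ i, θ i • p i).2.1.differentiable one_ne_zero)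
            (v.2.1.differentiable one_ne_zero), coe_sum, hJ]
      _ = ‖∑ i, θ i • p i - v‖ ^ 2 := real_inner_self_eq_norm_sq (∑ i, θ i • p i - v)
  simp only [J_eq_norm_sq, H_eq_gram, rhs_eq_inner] at hθstar ⊢
  exact ⟨(posDef_gram_of_linearIndependent hp).isUnit, inv_gram_mulVec_isMinimizer hp hθstar⟩

/-- In the Langevin setting (`b = ∇U`, `m = e^{2U/σ²}`, `ℒV = r`), the feature matrix
`H_{ij} = ∫_Q φ_i ℒφ_j m` is invertible and
`θ* = H⁻¹ ∫_Q r φ m` is the unique minimizer of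
`J(θ) = ∫_Q [ρ (v(·,θ) − V)² + (σ²/2) |∇v(·,θ) − ∇V|²] m`. -/
theorem tdzero_limit_is_minimizer
    (d n : ℕ) (hd : 1 ≤ d) (ρ σ : ℝ) (hρ : 0 < ρ) (hσ : 0 < σ)
    (U : EuclideanSpace ℝ (Fin d) → ℝ) (hU : ContDiff ℝ 2 U) (hUper : ZdPeriodic U)
    (m : EuclideanSpace ℝ (Fin d) → ℝ)
    (hm : m = fun x => Real.exp (2 * U x / σ ^ 2))
    (r : EuclideanSpace ℝ (Fin d) → ℝ) (hr : Continuous r) (hrper : ZdPeriodic r)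
    (V : EuclideanSpace ℝ (Fin d) → ℝ) (hV : ContDiff ℝ 2 V) (hVper : ZdPeriodic V)
    (hPDE : ∀ x, genU ρ σ U V x = r x)
    (φ : Fin n → EuclideanSpace ℝ (Fin d) → ℝ)
    (hφ : ∀ i, ContDiff ℝ 2 (φ i)) (hφper : ∀ i, ZdPeriodic (φ i))
    (hφli : LinearIndependent ℝ φ)
    (H : Matrix (Fin n) (Fin n) ℝ)
    (hH : ∀ i j, H i j = ∫ x in unitCube d, φ i x * genU ρ σ U (φ j) x * m x)
    (J : (Fin n → ℝ) → ℝ)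
    (hJ : ∀ θ, J θ =
      ∫ x in unitCube d,
        (ρ * ((∑ i, θ i * φ i x) - V x) ^ 2 +
          σ ^ 2 / 2 * ‖gradient (fun y => ∑ i, θ i * φ i y) x - gradient V x‖ ^ 2) * m x)
    (θstar : Fin n → ℝ)
    (hθstar : θstar = H⁻¹.mulVec fun i => ∫ x in unitCube d, r x * φ i x * m x) :
    IsUnit H ∧ (∀ θ, J θstar ≤ J θ) ∧ ∀ θ, J θ = J θstar → θ = θstar := by
  exact tdzero_limit_is_minimizer_general hρ hσ.ne' (hU.of_le one_le_two) hUper hm hV hVper hPDE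
    hφ hφper hφli hH hJ hθstar
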